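/- (Proposition 2.2(c)) Let f be an entire function that is real-valued on ℝ, with f(0) = 1 and ∫_ℝ f(x)² dx ≤ 1, and suppose that for every δ > 0 there is C_δ with |f(z)| ≤ C_δ exp((π + δ)|Im z|) for all z ∈ ℂ. Then f(z) = sin(πz)/(πz) for all z ∈ ℂ (with value 1 at z = 0). -/

import Mathlib

open MeasureTheory

open Complex Filter Topology

/-- A function holomorphic on the closed upper half-plane and decaying there has small integral over
`[-R, R]`, by moving the contour to the rest of the boundary of `[-R, R] × [0, R]`. -/
lemma norm_integral_le_of_decay_upperHalfPlane {q : ℂ → ℂ} {K δ : ℝ} (hδ : 0 < δ) (hK : 0 ≤ K)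
    (hq : DifferentiableOn ℂ q {z | 0 ≤ z.im})
    (hb : ∀ z : ℂ, 0 ≤ z.im → 1 ≤ ‖z‖ →
      ‖q z‖ ≤ K * (Real.exp (-(δ * z.im)) / ‖z‖ + 1 / ‖z‖ ^ 2)) {R : ℝ} (hR : 1 ≤ R) :
    ‖∫ x in (-R)..R, q x‖ ≤ 4 * K * (1 / δ + 1) / R := by
  have hR0 : 0 < R := by linarith
  have hrect := Complex.integral_boundary_rect_eq_zero_of_differentiableOn q (-R : ℂ) (R + R * I)
    (hq.mono (by
      intro z hz
      have h := hz.2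
      simp [Set.uIcc_of_le hR0.le] at h
      exact h.1))
  simp only [neg_re, ofReal_re, add_re, mul_re, I_re, mul_zero, ofReal_im, I_im, mul_one, sub_self,
    add_zero, neg_im, neg_zero, ofReal_zero, zero_mul, add_im, mul_im, zero_add, smul_eq_mul] at hrect
  push_cast at hrect
  have hexp : ∫ y in (0:ℝ)..R, Real.exp (-(δ * y)) ≤ 1 / δ := by
    have : ∀ y ∈ Set.uIcc 0 R, HasDerivAt (fun y => -(1 / δ) * Real.exp (-(δ * y)))
        (Real.exp (-(δ * y))) y := by
      intro y _
      have h : HasDerivAt (fun y => -(δ * y)) (-δ) y := by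
        simpa using ((hasDerivAt_id y).const_mul (-δ))
      refine (h.exp.const_mul (-(1 / δ))).congr_deriv ?_
      field_simp
    rw [intervalIntegral.integral_eq_sub_of_hasDerivAt this
      ((by fun_prop : Continuous fun y : ℝ => Real.exp (-(δ * y))).intervalIntegrable _ _)]
    have : 0 ≤ 1 / δ * Real.exp (-(δ * R)) := by positivity
    simp only [mul_zero, neg_zero, Real.exp_zero]
    linarith
  have hside : ∀ s : ℝ, |s| = R → ‖∫ y in (0:ℝ)..R, q (s + y * I)‖ ≤ K * (1 / δ + 1) / R := by
    intro s hs
    have h1 : ‖∫ y in (0:ℝ)..R, q (s + y * I)‖ ≤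
        ∫ y in (0:ℝ)..R, K * (Real.exp (-(δ * y)) / R + 1 / R ^ 2) := by
      apply intervalIntegral.norm_integral_le_of_norm_le hR0.le
      · refine Eventually.of_forall fun y hy => ?_
        have hn : R ≤ ‖(s + y * I : ℂ)‖ := by
          have := Complex.abs_re_le_norm (s + y * I)
          simpa [hs] using this
        have him : (s + y * I : ℂ).im = y := by simp
        refine (hb _ (by rw [him]; exact hy.1.le) (hR.trans hn)).trans ?_
        rw [him]
        gcongr
      · exact (by fun_prop : Continuous fun y : ℝ =>
          K * (Real.exp (-(δ * y)) / R + 1 / R ^ 2)).intervalIntegrable _ _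
    refine h1.trans ?_
    rw [intervalIntegral.integral_const_mul, intervalIntegral.integral_add
      ((by fun_prop : Continuous fun y : ℝ => Real.exp (-(δ * y)) / R).intervalIntegrable _ _)
      (by simp), intervalIntegral.integral_div, intervalIntegral.integral_const]
    rw [mul_div_assoc, add_div]
    gcongr
    simp only [sub_zero, smul_eq_mul]
    apply le_of_eq
    field_simp
  have htop : ‖∫ x in (-R)..R, q (x + R * I)‖ ≤ 2 * K * (1 / δ + 1) / R := by
    have hE : Real.exp (-(δ * R)) ≤ 1 / (δ * R) := by
      rw [Real.exp_neg, ← one_div]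
      have := Real.add_one_le_exp (δ * R)
      apply one_div_le_one_div_of_le (by positivity)
      linarith
    have h1 : ‖∫ x in (-R)..R, q (x + R * I)‖ ≤
        (K * (1 / (δ * R) / R + 1 / R ^ 2)) * |R - -R| := by
      apply intervalIntegral.norm_integral_le_of_norm_le_const
      intro x _
      have hn : R ≤ ‖(x + R * I : ℂ)‖ := by
        have := Complex.abs_im_le_norm (x + R * I)
        simpa [abs_of_pos hR0] using this
      have him : (x + R * I : ℂ).im = R := by simp
      refine (hb _ (by rw [him]; exact hR0.le) (hR.trans hn)).trans ?_
      rw [him]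
      gcongr
    refine h1.trans (le_of_eq ?_)
    rw [abs_of_pos (by linarith)]
    field_simp
    ring
  have h1 := hside R (abs_of_pos hR0)
  have h2 := hside (-R) (by rw [abs_neg, abs_of_pos hR0])
  push_cast at h2
  have heq : ∫ x in (-R)..R, q x = (∫ x in (-R)..R, q (x + R * I))
      - I * (∫ y in (0:ℝ)..R, q (R + y * I)) + I * ∫ y in (0:ℝ)..R, q (-R + y * I) := by
    linear_combination hrect
  rw [heq]
  calc _ ≤ ‖∫ x in (-R)..R, q (x + R * I)‖ + ‖I * ∫ y in (0:ℝ)..R, q (R + y * I)‖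
        + ‖I * ∫ y in (0:ℝ)..R, q (-R + y * I)‖ :=
      (norm_add_le _ _).trans (by gcongr; exact norm_sub_le _ _)
    _ ≤ 2 * K * (1 / δ + 1) / R + K * (1 / δ + 1) / R + K * (1 / δ + 1) / R := by
      rw [norm_mul, norm_mul, norm_I, one_mul, one_mul]
      gcongr
    _ = _ := by ring

/-- The Cauchy kernel quotient `(f(z) e^{iμz} - f(0)/(1 - iz)) / z`, extended analytically to `0`. -/
noncomputable def upperKernel (f : ℂ → ℂ) (μ : ℝ) : ℂ → ℂ :=
  dslope (fun z => f z * exp (I * μ * z) - f 0 / (1 - I * z)) 0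

lemma upperKernel_of_ne (f : ℂ → ℂ) (μ : ℝ) {z : ℂ} (hz : z ≠ 0) :
    upperKernel f μ z = (f z * exp (I * μ * z) - f 0 / (1 - I * z)) / z := by
  rw [upperKernel, dslope_of_ne _ hz, slope_def_field]
  simp

lemma differentiableOn_upperKernel {f : ℂ → ℂ} (hf : Differentiable ℂ f) (μ : ℝ) :
    DifferentiableOn ℂ (upperKernel f μ) {z | -1 < z.im} := by
  have hopen : IsOpen {z : ℂ | -1 < z.im} := isOpen_lt continuous_const continuous_im
  rw [upperKernel, Complex.differentiableOn_dslope (hopen.mem_nhds (by simp))]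
  refine DifferentiableOn.sub (by fun_prop) (DifferentiableOn.div (by fun_prop) (by fun_prop) ?_)
  intro z hz h
  have := congrArg re h
  simp at this hz
  linarith

lemma tendsto_integral_upperKernel {f : ℂ → ℂ} (hf : Differentiable ℂ f) {C a μ : ℝ} (haμ : a < μ)
    (hb : ∀ z : ℂ, ‖f z‖ ≤ C * Real.exp (a * |z.im|)) :
    Tendsto (fun R : ℝ => ∫ x in (-R)..R, upperKernel f μ x) atTop (𝓝 0) := by
  have hC : 0 ≤ C := by simpa using (norm_nonneg _).trans (hb 0)
  have hδ : 0 < μ - a := by linarith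
  have key : ∀ z : ℂ, 0 ≤ z.im → 1 ≤ ‖z‖ → ‖upperKernel f μ z‖ ≤
      (C + ‖f 0‖) * (Real.exp (-((μ - a) * z.im)) / ‖z‖ + 1 / ‖z‖ ^ 2) := by
    intro z hz hz1
    have hz0 : 0 < ‖z‖ := by linarith
    rw [upperKernel_of_ne f μ (norm_pos_iff.1 hz0), norm_div]
    have h1 : ‖f z * exp (I * μ * z)‖ ≤ C * Real.exp (-((μ - a) * z.im)) := by
      rw [norm_mul, norm_exp]
      calc _ ≤ C * Real.exp (a * |z.im|) * Real.exp (I * μ * z).re := by gcongr; exact hb z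
        _ = _ := by
          rw [mul_assoc, ← Real.exp_add, abs_of_nonneg hz]
          congr 2
          simp
          ring
    have h2 : ‖f 0 / (1 - I * z)‖ ≤ ‖f 0‖ / ‖z‖ := by
      rw [norm_div]
      gcongr
      rw [norm_def, norm_def]
      apply Real.sqrt_le_sqrt
      simp only [normSq_apply, sub_re, sub_im, mul_re, mul_im, one_re, one_im, I_re, I_im]
      nlinarith
    have h3 := (norm_sub_le (f z * exp (I * μ * z)) (f 0 / (1 - I * z))).trans (add_le_add h1 h2)
    calc _ ≤ (C * Real.exp (-((μ - a) * z.im)) + ‖f 0‖ / ‖z‖) / ‖z‖ := by gcongr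
      _ = C * (Real.exp (-((μ - a) * z.im)) / ‖z‖) + ‖f 0‖ * (1 / ‖z‖ ^ 2) := by field_simp
      _ ≤ (C + ‖f 0‖) * (Real.exp (-((μ - a) * z.im)) / ‖z‖)
          + (C + ‖f 0‖) * (1 / ‖z‖ ^ 2) := by
        gcongr
        · linarith [norm_nonneg (f 0)]
        · linarith
      _ = _ := by ring
  refine squeeze_zero_norm' (a := fun R => 4 * (C + ‖f 0‖) * (1 / (μ - a) + 1) / R) ?_
    (tendsto_const_nhds.div_atTop tendsto_id)
  filter_upwards [eventually_ge_atTop 1] with R hR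
  refine norm_integral_le_of_decay_upperHalfPlane hδ (by positivity)
    ((differentiableOn_upperKernel hf μ).mono fun z hz => ?_) key hR
  simp only [Set.mem_ofPred_eq] at hz ⊢
  linarith

lemma upperKernel_add_upperKernel_comp_neg (f : ℂ → ℂ) (μ : ℝ) {x : ℝ} (hx : x ≠ 0) :
    upperKernel f μ x + upperKernel (fun z => f (-z)) μ (-x : ℝ) =
      2 * I * (f x * (Real.sin (μ * x) / x : ℝ) - f 0 * ((1 + x ^ 2)⁻¹ : ℝ)) := by
  have hx' : (x : ℂ) ≠ 0 := ofReal_ne_zero.2 hx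
  rw [upperKernel_of_ne _ _ hx', upperKernel_of_ne _ _ (by simpa using hx)]
  have h1 : (1 - I * x : ℂ) ≠ 0 := fun h => by simpa using congrArg re h
  have h2 : (1 + I * x : ℂ) ≠ 0 := fun h => by simpa using congrArg re h
  have h3 : (1 + x ^ 2 : ℂ) = (1 - I * x) * (1 + I * x) := by
    linear_combination (x : ℂ) ^ 2 * I_sq
  push_cast
  have e1 : exp (I * μ * x) = cos (μ * x) + sin (μ * x) * I := by
    rw [← exp_mul_I]; ring_nf
  have e2 : exp (I * μ * -x) = cos (μ * x) - sin (μ * x) * I := by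
    rw [show I * μ * -x = -(μ * x) * I by ring, exp_mul_I, cos_neg, sin_neg]; ring
  rw [e1, e2, h3]
  simp only [neg_neg, neg_zero, mul_neg, sub_neg_eq_add]
  have h4 : f 0 / (1 - I * x) - f 0 / (1 + I * x) =
      2 * I * x * (f 0 * ((1 - I * x) * (1 + I * x))⁻¹) := by
    rw [div_sub_div _ _ h1 h2, div_eq_mul_inv]
    ring
  generalize ((1 - I * x) * (1 + I * x))⁻¹ = D at h4 ⊢
  have h5 : f x * (cos (μ * x) + sin (μ * x) * I) - f 0 / (1 - I * x)
      - (f x * (cos (μ * x) - sin (μ * x) * I) - f 0 / (1 + I * x)) =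
      2 * I * (f x * sin (μ * x) - x * (f 0 * D)) := by
    linear_combination -h4
  rw [div_neg, ← sub_eq_add_neg, ← sub_div, h5]
  field_simp

lemma sq_sin_div_le {μ : ℝ} (h0 : 0 ≤ μ) (h4 : μ ≤ 4) (x : ℝ) :
    (Real.sin (μ * x) / x) ^ 2 ≤ 17 * (1 + x ^ 2)⁻¹ := by
  rcases eq_or_ne x 0 with rfl | hx
  · simp
  have hx2 : 0 < x ^ 2 := by positivity
  have h1 : Real.sin (μ * x) ^ 2 ≤ 1 := Real.sin_sq_le_one _
  have h2 : Real.sin (μ * x) ^ 2 ≤ 16 * x ^ 2 := by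
    calc Real.sin (μ * x) ^ 2 ≤ (μ * x) ^ 2 := sq_le_sq.2 Real.abs_sin_le_abs
      _ = μ ^ 2 * x ^ 2 := by ring
      _ ≤ _ := by gcongr; nlinarith
  rw [div_pow, ← div_eq_mul_inv, div_le_div_iff₀ hx2 (by positivity)]
  nlinarith

lemma norm_mul_sin_div_le (f : ℝ → ℂ) {μ : ℝ} (h0 : 0 ≤ μ) (h4 : μ ≤ 4) (x : ℝ) :
    ‖f x * (Real.sin (μ * x) / x : ℝ)‖ ≤ ‖f x‖ ^ 2 + 17 * (1 + x ^ 2)⁻¹ := by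
  have h := sq_sin_div_le h0 h4 x
  rw [norm_mul, norm_real, Real.norm_eq_abs]
  rw [← sq_abs] at h
  nlinarith [sq_nonneg (‖f x‖ - |Real.sin (μ * x) / x|), sq_nonneg (‖f x‖),
    sq_nonneg (|Real.sin (μ * x) / x|)]

lemma integrable_sq_add {f : ℝ → ℂ} (hL : Integrable fun x : ℝ => ‖f x‖ ^ 2) :
    Integrable fun x : ℝ => ‖f x‖ ^ 2 + 17 * (1 + x ^ 2)⁻¹ :=
  hL.add (integrable_inv_one_add_sq.const_mul 17)

lemma aestronglyMeasurable_mul_sin_div {f : ℝ → ℂ} (hf : Continuous f) (μ : ℝ) :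
    AEStronglyMeasurable (fun x : ℝ => f x * (Real.sin (μ * x) / x : ℝ)) volume := by
  have := hf.measurable
  exact Measurable.aestronglyMeasurable (by fun_prop)

lemma integrable_mul_sin_div {f : ℝ → ℂ} (hf : Continuous f)
    (hL : Integrable fun x : ℝ => ‖f x‖ ^ 2) {μ : ℝ} (h0 : 0 ≤ μ) (h4 : μ ≤ 4) :
    Integrable fun x : ℝ => f x * (Real.sin (μ * x) / x : ℝ) :=
  (integrable_sq_add hL).mono' (aestronglyMeasurable_mul_sin_div hf μ)
    (Eventually.of_forall (norm_mul_sin_div_le f h0 h4))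

lemma continuous_upperKernel_ofReal {f : ℂ → ℂ} (hf : Differentiable ℂ f) (μ : ℝ) :
    Continuous fun x : ℝ => upperKernel f μ x :=
  (differentiableOn_upperKernel hf μ).continuousOn.comp_continuous continuous_ofReal (by simp)

lemma integral_mul_sin_div_of_lt {f : ℂ → ℂ} (hf : Differentiable ℂ f) {C a μ : ℝ} (haμ : a < μ)
    (hb : ∀ z : ℂ, ‖f z‖ ≤ C * Real.exp (a * |z.im|))
    (hL : Integrable fun x : ℝ => ‖f x‖ ^ 2) (h0 : 0 ≤ μ) (h4 : μ ≤ 4) :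
    ∫ x : ℝ, f x * (Real.sin (μ * x) / x : ℝ) = Real.pi * f 0 := by
  have hfc : Continuous fun x : ℝ => f x := hf.continuous.comp continuous_ofReal
  have hi1 := integrable_mul_sin_div hfc hL h0 h4
  have hi2 : Integrable fun x : ℝ => f 0 * ((1 + x ^ 2)⁻¹ : ℝ) :=
    (integrable_inv_one_add_sq.ofReal).const_mul _
  have hg : Differentiable ℂ fun z => f (-z) := hf.comp differentiable_neg
  have t1 := tendsto_integral_upperKernel hf haμ hb
  have t2 := tendsto_integral_upperKernel hg haμ (fun z => by simpa using hb (-z))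
  have t3 := intervalIntegral_tendsto_integral ((hi1.sub hi2).const_mul (2 * I))
    tendsto_neg_atTop_atBot tendsto_id
  have heq : ∀ R : ℝ, (∫ x in (-R)..R, upperKernel f μ x)
      + (∫ x in (-R)..R, upperKernel (fun z => f (-z)) μ x) =
      ∫ x in (-R)..R, 2 * I * (f x * (Real.sin (μ * x) / x : ℝ) - f 0 * ((1 + x ^ 2)⁻¹ : ℝ)) := by
    intro R
    have h := intervalIntegral.integral_comp_neg (a := -R) (b := R)
      (fun x : ℝ => upperKernel (fun z => f (-z)) μ x)
    rw [neg_neg] at h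
    have hc : Continuous fun x : ℝ => upperKernel (fun z => f (-z)) μ (-x : ℝ) :=
      (continuous_upperKernel_ofReal hg μ).comp continuous_neg
    rw [← h, ← intervalIntegral.integral_add
      ((continuous_upperKernel_ofReal hf μ).intervalIntegrable _ _) (hc.intervalIntegrable _ _)]
    apply intervalIntegral.integral_congr_ae
    filter_upwards [Measure.ae_ne volume (0 : ℝ)] with x hx _
    exact upperKernel_add_upperKernel_comp_neg f μ hx
  have t4 := (t1.add t2).congr heq
  have h := tendsto_nhds_unique t3 t4
  simp only [Pi.sub_apply] at h
  rw [integral_const_mul, integral_sub hi1 hi2, add_zero, integral_const_mul, integral_complex_ofReal,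
    integral_univ_inv_one_add_sq] at h
  have h' := (mul_eq_zero.1 h).resolve_left (by simp)
  linear_combination h'

/-- **Reproducing formula** for square-integrable functions of exponential type `π`. -/
lemma integral_mul_sin_pi_div {f : ℂ → ℂ} (hf : Differentiable ℂ f)
    (hL : Integrable fun x : ℝ => ‖f x‖ ^ 2)
    (hgrow : ∀ δ : ℝ, 0 < δ → ∃ C : ℝ, ∀ w : ℂ,
      ‖f w‖ ≤ C * Real.exp ((Real.pi + δ) * |w.im|)) :
    ∫ x : ℝ, f x * (Real.sin (Real.pi * x) / x : ℝ) = Real.pi * f 0 := by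
  have hfc : Continuous fun x : ℝ => f x := hf.continuous.comp continuous_ofReal
  have hmem : ∀ᶠ μ in 𝓝[>] Real.pi, μ ∈ Set.Ioc Real.pi 4 := by
    filter_upwards [Ioo_mem_nhdsGT Real.pi_lt_four] with μ hμ using ⟨hμ.1, hμ.2.le⟩
  have t : Tendsto (fun μ : ℝ => ∫ x : ℝ, f x * (Real.sin (μ * x) / x : ℝ)) (𝓝[>] Real.pi)
      (𝓝 (∫ x : ℝ, f x * (Real.sin (Real.pi * x) / x : ℝ))) := by
    refine tendsto_integral_filter_of_dominated_convergence _
      (Eventually.of_forall fun μ => aestronglyMeasurable_mul_sin_div hfc μ) ?_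
      (integrable_sq_add hL) (Eventually.of_forall fun x => ?_)
    · filter_upwards [hmem] with μ hμ
      exact Eventually.of_forall
        (norm_mul_sin_div_le (fun x : ℝ => f x) (Real.pi_pos.le.trans hμ.1.le) hμ.2)
    · have : Continuous fun μ : ℝ => f x * (Real.sin (μ * x) / x : ℝ) := by fun_prop
      exact (this.tendsto Real.pi).mono_left nhdsWithin_le_nhds
  refine tendsto_nhds_unique t (tendsto_const_nhds.congr' ?_)
  filter_upwards [hmem] with μ hμ
  obtain ⟨C, hC⟩ := hgrow ((μ - Real.pi) / 2) (by linarith [hμ.1])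
  exact (integral_mul_sin_div_of_lt hf (by linarith [hμ.1]) hC hL
    (Real.pi_pos.le.trans hμ.1.le) hμ.2).symm

/-- The entire function `sin (π z) / (π z)`. -/
noncomputable def cardinalSine : ℂ → ℂ := dslope (fun z => sin (Real.pi * z) / Real.pi) 0

lemma cardinalSine_eq (w : ℂ) :
    cardinalSine w = if w = 0 then 1 else sin (Real.pi * w) / (Real.pi * w) := by
  have hpi : (Real.pi : ℂ) ≠ 0 := ofReal_ne_zero.2 Real.pi_ne_zero
  split_ifs with h
  · rw [h, cardinalSine, dslope_same]
    have h1 : HasDerivAt (fun z : ℂ => (Real.pi : ℂ) * z) Real.pi 0 := by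
      simpa using (hasDerivAt_id (0 : ℂ)).const_mul (Real.pi : ℂ)
    have := (h1.csin.div_const (Real.pi : ℂ)).deriv
    rw [this]
    simp [hpi]
  · rw [cardinalSine, dslope_of_ne _ h, slope_def_field]
    simp only [mul_zero, sin_zero, zero_div, sub_zero]
    field_simp

lemma differentiable_cardinalSine : Differentiable ℂ cardinalSine := by
  rw [← differentiableOn_univ, cardinalSine, Complex.differentiableOn_dslope univ_mem]
  fun_prop

lemma norm_sin_le_exp (z : ℂ) : ‖sin z‖ ≤ Real.exp |z.im| := by
  have h1 : ‖exp (-z * I)‖ ≤ Real.exp |z.im| := by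
    rw [norm_exp]; simpa using le_abs_self z.im
  have h2 : ‖exp (z * I)‖ ≤ Real.exp |z.im| := by
    rw [norm_exp]; simpa using neg_le_abs z.im
  rw [sin, norm_div, norm_mul, norm_I, mul_one, norm_ofNat]
  linarith [norm_sub_le (exp (-z * I)) (exp (z * I))]

lemma exists_norm_cardinalSine_le :
    ∃ C : ℝ, ∀ z : ℂ, ‖cardinalSine z‖ ≤ C * Real.exp (Real.pi * |z.im|) := by
  obtain ⟨M, hM⟩ := (isCompact_closedBall (0 : ℂ) 1).exists_bound_of_continuousOn
    differentiable_cardinalSine.continuous.continuousOn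
  have hM0 : 0 ≤ M := (norm_nonneg _).trans (hM 0 (by simp))
  refine ⟨M + 1, fun z => ?_⟩
  rcases le_total ‖z‖ 1 with hz | hz
  · have h1 := hM z (by simpa using hz)
    have h2 : 1 ≤ Real.exp (Real.pi * |z.im|) := Real.one_le_exp (by positivity)
    nlinarith
  · have hz0 : z ≠ 0 := norm_pos_iff.1 (by linarith)
    rw [cardinalSine_eq, if_neg hz0, norm_div]
    have h1 := norm_sin_le_exp (Real.pi * z)
    rw [im_ofReal_mul, abs_mul, abs_of_pos Real.pi_pos] at h1
    have h2 : 1 ≤ ‖(Real.pi * z : ℂ)‖ := by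
      rw [norm_mul, norm_real, Real.norm_eq_abs, abs_of_pos Real.pi_pos]
      nlinarith [Real.pi_gt_three]
    calc _ ≤ ‖sin (Real.pi * z)‖ := div_le_self (norm_nonneg _) h2
      _ ≤ 1 * Real.exp (Real.pi * |z.im|) := by simpa using h1
      _ ≤ _ := by gcongr; linarith

lemma cardinalSine_ofReal {x : ℝ} (hx : x ≠ 0) :
    cardinalSine x = (Real.sin (Real.pi * x) / x / Real.pi : ℝ) := by
  rw [cardinalSine_eq, if_neg (by simpa using hx)]
  push_cast
  rw [div_div, mul_comm (x : ℂ)]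

lemma integrable_sq_sin_div : Integrable fun x : ℝ => (Real.sin (Real.pi * x) / x) ^ 2 := by
  refine (integrable_inv_one_add_sq.const_mul 17).mono'
    (Measurable.aestronglyMeasurable (by fun_prop)) (Eventually.of_forall fun x => ?_)
  rw [Real.norm_eq_abs, abs_of_nonneg (sq_nonneg _)]
  exact sq_sin_div_le Real.pi_pos.le Real.pi_le_four x

lemma integral_sq_sin_div : ∫ x : ℝ, (Real.sin (Real.pi * x) / x) ^ 2 = Real.pi ^ 2 := by
  have hL : Integrable fun x : ℝ => ‖cardinalSine x‖ ^ 2 := by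
    refine (integrable_sq_sin_div.div_const (Real.pi ^ 2)).congr ?_
    filter_upwards [Measure.ae_ne volume (0 : ℝ)] with x hx
    rw [cardinalSine_ofReal hx, norm_real, Real.norm_eq_abs, sq_abs, div_pow _ Real.pi]
  have h := integral_mul_sin_pi_div differentiable_cardinalSine hL (fun δ hδ => by
    obtain ⟨C, hC⟩ := exists_norm_cardinalSine_le
    have hC0 : 0 ≤ C := by simpa using (norm_nonneg _).trans (hC 0)
    refine ⟨C, fun w => (hC w).trans ?_⟩
    gcongr
    linarith)
  have h2 : ∫ x : ℝ, cardinalSine x * (Real.sin (Real.pi * x) / x : ℝ) =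
      ∫ x : ℝ, (((Real.sin (Real.pi * x) / x) ^ 2 / Real.pi : ℝ) : ℂ) := by
    apply integral_congr_ae
    filter_upwards [Measure.ae_ne volume (0 : ℝ)] with x hx
    rw [cardinalSine_ofReal hx, ← ofReal_mul]
    congr 1
    ring
  rw [h2, integral_complex_ofReal, integral_div, cardinalSine_eq, if_pos rfl, mul_one, ofReal_inj,
    div_eq_iff Real.pi_ne_zero] at h
  rw [h, sq]

/-- **Proposition 2.2(c)** of Avila–Last–Simon: if `f` is entire, real on `ℝ`, `f(0) = 1`,
`∫_ℝ f(x)² dx ≤ 1`, and for every `δ > 0` there is `C_δ` with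
`|f(z)| ≤ C_δ exp((π + δ)|Im z|)`, then `f(z) = sin(πz)/(πz)`. -/
theorem stmt_6 (f : ℂ → ℂ) (hf : Differentiable ℂ f)
    (hreal : ∀ x : ℝ, (f x).im = 0) (hf0 : f 0 = 1)
    (hL2 : (∫⁻ x : ℝ, ENNReal.ofReal (‖f x‖ ^ 2)) ≤ 1)
    (hgrow : ∀ δ : ℝ, 0 < δ → ∃ Cδ : ℝ, ∀ w : ℂ,
      ‖f w‖ ≤ Cδ * Real.exp ((Real.pi + δ) * |w.im|)) :
    ∀ w : ℂ, f w = if w = 0 then 1 else Complex.sin (Real.pi * w) / (Real.pi * w) := by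
  have hfc : Continuous fun x : ℝ => f x := hf.continuous.comp continuous_ofReal
  have hre : ∀ x : ℝ, f x = ((f x).re : ℂ) := fun x =>
    Complex.ext (by simp) (by simp [hreal x])
  have hnorm : ∀ x : ℝ, ‖f x‖ ^ 2 = (f x).re ^ 2 := fun x => by
    rw [hre x, norm_real, Real.norm_eq_abs, sq_abs, ofReal_re]
  have hL : Integrable fun x : ℝ => ‖f x‖ ^ 2 := by
    refine ⟨(hfc.norm.pow 2).aestronglyMeasurable, ?_⟩
    rw [hasFiniteIntegral_iff_ofReal (Eventually.of_forall fun x => sq_nonneg _)]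
    exact hL2.trans_lt ENNReal.one_lt_top
  have hle : ∫ x : ℝ, (f x).re ^ 2 ≤ 1 := by
    simp_rw [← hnorm]
    rw [integral_eq_lintegral_of_nonneg_ae (Eventually.of_forall fun x => sq_nonneg _)
      hL.aestronglyMeasurable]
    exact ENNReal.toReal_le_of_le_ofReal zero_le_one (by simpa using hL2)
  have hi1 : Integrable fun x : ℝ => (f x).re ^ 2 := by simpa only [hnorm] using hL
  have hi2 : Integrable fun x : ℝ => (f x).re * (Real.sin (Real.pi * x) / x) := by
    refine (integrable_mul_sin_div hfc hL Real.pi_pos.le Real.pi_le_four).re.congr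
      (Eventually.of_forall fun x => ?_)
    exact re_mul_ofReal _ _
  have hrep : ∫ x : ℝ, (f x).re * (Real.sin (Real.pi * x) / x) = Real.pi := by
    have h := integral_mul_sin_pi_div hf hL hgrow
    rw [hf0, mul_one] at h
    rw [← ofReal_inj, ← h, ← integral_complex_ofReal]
    refine integral_congr_ae (Eventually.of_forall fun x => ?_)
    change (((f x).re * (Real.sin (Real.pi * x) / x) : ℝ) : ℂ) = _
    rw [ofReal_mul, ← hre x]
  have hexpand : ∀ x : ℝ, (Real.pi * (f x).re - Real.sin (Real.pi * x) / x) ^ 2 =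
      Real.pi ^ 2 * (f x).re ^ 2 - 2 * Real.pi * ((f x).re * (Real.sin (Real.pi * x) / x))
        + (Real.sin (Real.pi * x) / x) ^ 2 := fun x => by ring
  have hj1 := hi1.const_mul (Real.pi ^ 2)
  have hj2 := hi2.const_mul (2 * Real.pi)
  have hint : Integrable fun x : ℝ => (Real.pi * (f x).re - Real.sin (Real.pi * x) / x) ^ 2 := by
    simp_rw [hexpand]
    exact (hj1.sub hj2).add integrable_sq_sin_div
  have hzero : ∫ x : ℝ, (Real.pi * (f x).re - Real.sin (Real.pi * x) / x) ^ 2 = 0 := by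
    apply le_antisymm _ (integral_nonneg fun x => sq_nonneg _)
    simp_rw [hexpand]
    rw [integral_add (by exact hj1.sub hj2) integrable_sq_sin_div, integral_sub hj1 hj2,
      integral_const_mul, integral_const_mul, hrep, integral_sq_sin_div]
    nlinarith [sq_nonneg Real.pi]
  rw [integral_eq_zero_iff_of_nonneg (fun x => sq_nonneg _) hint] at hzero
  have hcs : Continuous fun x : ℝ => cardinalSine x :=
    differentiable_cardinalSine.continuous.comp continuous_ofReal
  have hae : (fun x : ℝ => f x) =ᵐ[volume] fun x : ℝ => cardinalSine x := by
    filter_upwards [hzero, Measure.ae_ne volume (0 : ℝ)] with x hx hx0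
    have hx' : Real.pi * (f x).re - Real.sin (Real.pi * x) / x = 0 := by simpa using hx
    rw [cardinalSine_ofReal hx0, hre x, ofReal_inj, eq_div_iff Real.pi_ne_zero]
    linarith
  have hR : ∀ x : ℝ, f x = cardinalSine x := congrFun (hfc.ae_eq_iff_eq volume hcs |>.1 hae)
  have hfun : f = cardinalSine := by
    refine AnalyticOnNhd.eq_of_frequently_eq (z₀ := 0)
      (fun z _ => hf.analyticAt z) (fun z _ => differentiable_cardinalSine.analyticAt z) ?_
    have ht : Tendsto (fun x : ℝ => (x : ℂ)) (𝓝[≠] 0) (𝓝[≠] 0) := by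
      refine tendsto_nhdsWithin_iff.2 ⟨?_, ?_⟩
      · simpa using (continuous_ofReal.tendsto 0).mono_left nhdsWithin_le_nhds
      · filter_upwards [self_mem_nhdsWithin] with x hx
        simpa using hx
    exact ht.frequently (Frequently.of_forall hR)
  intro w
  rw [hfun, cardinalSine_eq]
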